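/- Let v ∈ ℂ^m ⊗ ℂ^n be a unit vector with Schmidt coefficients α₁ ≥ α₂ ≥ … ≥ α_{min(m,n)} ≥ 0 and fix 1 ≤ k ≤ min(m,n). Let r be the largest index with 1 ≤ r < k such that α_r > (Σ_{i=r+1}^{min(m,n)} α_i)/(k−r), taking r = 0 if no such index exists, and set α̃ := (Σ_{i=r+1}^{min(m,n)} α_i)/(k−r). Then ‖|v⟩⟨v|‖_{γ,k} = Σ_{i=1}^r α_i² + (k−r)α̃². -/

import Mathlib

open scoped Kronecker ComplexOrder
open Matrix

namespace Ent

variable {ι κ : Type*} [Fintype ι] [Fintype κ]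

/-- Inner product ⟨v,w⟩ = Σᵢ conj(v i) * (w i) (conjugate-linear in the first argument). -/
noncomputable def vinner (v w : ι → ℂ) : ℂ := dotProduct (star v) w

/-- An elementary (product) tensor a ⊗ b in ℂ^ι ⊗ ℂ^κ. -/
def prodVec (a : ι → ℂ) (b : κ → ℂ) : ι × κ → ℂ := fun p => a p.1 * b p.2

/-- `v` has Schmidt rank at most `k`. -/
def SchmidtRankLE (k : ℕ) (v : ι × κ → ℂ) : Prop :=
  ∃ (a : Fin k → ι → ℂ) (b : Fin k → κ → ℂ), v = ∑ i, prodVec (a i) (b i)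

/-- The rank-one operator |v⟩⟨w|. -/
noncomputable def ketBra (v : ι → ℂ) (w : κ → ℂ) : Matrix ι κ ℂ :=
  Matrix.vecMulVec v (star w)

/-- A finite family of vectors is orthonormal. -/
def Orthonormal' {N : Type*} [DecidableEq N] (v : N → ι → ℂ) : Prop :=
  ∀ i j, vinner (v i) (v j) = if i = j then 1 else 0

/-- The S(k)-norm of `X ∈ M_ι ⊗ M_κ`. -/
noncomputable def SkNorm (k : ℕ) (X : Matrix (ι × κ) (ι × κ) ℂ) : ℝ :=
  sSup { r | ∃ v w : ι × κ → ℂ, vinner v v = 1 ∧ vinner w w = 1 ∧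
    SchmidtRankLE k v ∧ SchmidtRankLE k w ∧
    r = ‖vinner v (X.mulVec w)‖ }

/-- The product numerical radius r_k^⊗. -/
noncomputable def prodRad (k : ℕ) (Y : Matrix (ι × κ) (ι × κ) ℂ) : ℝ :=
  sSup { r | ∃ v : ι × κ → ℂ, vinner v v = 1 ∧ SchmidtRankLE k v ∧
    r = ‖vinner v (Y.mulVec v)‖ }

/-- The norm ‖·‖_{γ,k}. -/
noncomputable def gammaNorm (k : ℕ) (X : Matrix (ι × κ) (ι × κ) ℂ) : ℝ :=
  sInf { r | ∃ (N : ℕ) (c : Fin N → ℂ) (v w : Fin N → (ι × κ → ℂ)),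
    (∀ i, vinner (v i) (v i) = 1 ∧ vinner (w i) (w i) = 1 ∧
      SchmidtRankLE k (v i) ∧ SchmidtRankLE k (w i)) ∧
    X = ∑ i, c i • ketBra (v i) (w i) ∧
    r = ∑ i, ‖c i‖ }

/-- `ρ` is a density matrix. -/
def IsDensity (ρ : Matrix ι ι ℂ) : Prop := ρ.PosSemidef ∧ ρ.trace = 1

/-- `ρ` has Schmidt number at most `k`: it is a convex combination of projections onto
unit vectors of Schmidt rank at most `k`. -/
def SchmidtNumLE (k : ℕ) (ρ : Matrix (ι × κ) (ι × κ) ℂ) : Prop :=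
  ∃ (N : ℕ) (p : Fin N → ℝ) (v : Fin N → (ι × κ → ℂ)),
    (∀ i, 0 ≤ p i ∧ vinner (v i) (v i) = 1 ∧ SchmidtRankLE k (v i)) ∧
    (∑ i, p i) = 1 ∧ ρ = ∑ i, p i • ketBra (v i) (v i)

/-- The robustness norm R_k on Hermitian operators. -/
noncomputable def Rk (k : ℕ) (Y : Matrix (ι × κ) (ι × κ) ℂ) : ℝ :=
  sInf { r | ∃ (c₁ c₂ : ℝ) (ρ₁ ρ₂ : Matrix (ι × κ) (ι × κ) ℂ),
    0 ≤ c₁ ∧ 0 ≤ c₂ ∧ IsDensity ρ₁ ∧ IsDensity ρ₂ ∧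
    SchmidtNumLE k ρ₁ ∧ SchmidtNumLE k ρ₂ ∧
    Y = c₁ • ρ₁ - c₂ • ρ₂ ∧ r = c₁ + c₂ }

/-- `Y` is k-block positive: ⟨v|Y|v⟩ ≥ 0 for every unit vector of Schmidt rank at most `k`. -/
def KBlockPos (k : ℕ) (Y : Matrix (ι × κ) (ι × κ) ℂ) : Prop :=
  ∀ v : ι × κ → ℂ, vinner v v = 1 → SchmidtRankLE k v →
    0 ≤ (vinner v (Y.mulVec v)).re

/-- Dual of a norm on matrices, w.r.t. the Hilbert–Schmidt inner product ⟨W,X⟩ = Tr(Wᴴ X). -/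
noncomputable def dualNormM (f : Matrix ι κ ℂ → ℝ) (X : Matrix ι κ ℂ) : ℝ :=
  sSup { r | ∃ W : Matrix ι κ ℂ, f W ≤ 1 ∧ r = ‖(Wᴴ * X).trace‖ }

/-- Dual of a norm, computed in the real Hilbert space of Hermitian matrices with the
Hilbert–Schmidt inner product ⟨W,Y⟩ = Tr(WY). -/
noncomputable def dualNormHerm (f : Matrix ι ι ℂ → ℝ) (Y : Matrix ι ι ℂ) : ℝ :=
  sSup { r | ∃ W : Matrix ι ι ℂ, W.IsHermitian ∧ f W ≤ 1 ∧ r = |((W * Y).trace).re| }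

/-- The Frobenius norm of a matrix. -/
noncomputable def frobNorm (X : Matrix ι κ ℂ) : ℝ :=
  Real.sqrt (∑ i, ∑ j, Complex.normSq (X i j))

/-- The (k,2)-norm: ‖X‖_{(k,2)} = sup { |Tr(XY)| : rank Y ≤ k, ‖Y‖_F ≤ 1 }. -/
noncomputable def kNorm (k : ℕ) (X : Matrix ι κ ℂ) : ℝ :=
  sSup { r | ∃ Y : Matrix κ ι ℂ, Y.rank ≤ k ∧ frobNorm Y ≤ 1 ∧
    r = ‖(X * Y).trace‖ }

/-- The trace norm: the sum of the singular values, i.e. of the square roots of the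
eigenvalues of Xᴴ X. -/
noncomputable def traceNorm [DecidableEq κ] (X : Matrix ι κ ℂ) : ℝ :=
  ∑ i, Real.sqrt ((Matrix.isHermitian_conjTranspose_mul_self X).eigenvalues i)

/-- The s(k) vector norm: sup of |⟨u,w⟩| over unit vectors u of Schmidt rank at most k. -/
noncomputable def skVecNorm (k : ℕ) (w : ι × κ → ℂ) : ℝ :=
  sSup { r | ∃ u : ι × κ → ℂ, vinner u u = 1 ∧ SchmidtRankLE k u ∧
    r = ‖vinner u w‖ }

/-- Dual of a norm on vectors. -/
noncomputable def dualNormV (f : (ι × κ → ℂ) → ℝ) (v : ι × κ → ℂ) : ℝ :=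
  sSup { r | ∃ w : ι × κ → ℂ, f w ≤ 1 ∧ r = ‖vinner w v‖ }

/-- The realignment map, L(X)_{(i,k),(j,l)} = X_{(i,j),(k,l)}. -/
def realign {m n : ℕ} (X : Matrix (Fin m × Fin n) (Fin m × Fin n) ℂ) :
    Matrix (Fin m × Fin m) (Fin n × Fin n) ℂ :=
  fun p q => X (p.1, q.1) (p.2, q.2)

/-- The projective tensor norm on M_{m,n} ⊗ M_{m,n}. -/
noncomputable def projNorm {m n : ℕ} (Z : Matrix (Fin m × Fin m) (Fin n × Fin n) ℂ) : ℝ :=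
  sInf { r | ∃ (N : ℕ) (A B : Fin N → Matrix (Fin m) (Fin n) ℂ),
    Z = ∑ i, A i ⊗ₖ B i ∧ r = ∑ i, traceNorm (A i) * traceNorm (B i) }


/-! ### Basic facts on `vinner` -/

theorem vinner_eq (v w : ι → ℂ) :
    vinner v w = inner ℂ (WithLp.toLp 2 v : EuclideanSpace ℂ ι) (WithLp.toLp 2 w) := by
  rw [EuclideanSpace.inner_toLp_toLp, vinner, dotProduct_comm]

/-- Euclidean norm of a vector. -/
noncomputable def vn (v : ι → ℂ) : ℝ := ‖(WithLp.toLp 2 v : EuclideanSpace ℂ ι)‖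

theorem vn_nonneg (v : ι → ℂ) : 0 ≤ vn v := norm_nonneg _

theorem vinner_self (v : ι → ℂ) : vinner v v = ((vn v ^ 2 : ℝ) : ℂ) := by
  rw [vinner_eq, inner_self_eq_norm_sq_to_K, vn]; simp

theorem vinner_add_left (u v w : ι → ℂ) : vinner (u + v) w = vinner u w + vinner v w := by
  simp [vinner, add_dotProduct]

theorem vinner_sum_left {T : Type*} (s : Finset T) (f : T → ι → ℂ) (w : ι → ℂ) :
    vinner (∑ i ∈ s, f i) w = ∑ i ∈ s, vinner (f i) w := by
  simp only [vinner, star_sum, sum_dotProduct]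

theorem vinner_sum_right {T : Type*} (s : Finset T) (f : T → ι → ℂ) (w : ι → ℂ) :
    vinner w (∑ i ∈ s, f i) = ∑ i ∈ s, vinner w (f i) := by
  simp only [vinner, dotProduct_sum]

theorem vinner_rsmul_left (c : ℝ) (v w : ι → ℂ) : vinner (c • v) w = c * vinner v w := by
  simp only [vinner, dotProduct, Finset.mul_sum]
  refine Finset.sum_congr rfl fun i _ => ?_
  simp [mul_assoc]

theorem vinner_rsmul_right (c : ℝ) (v w : ι → ℂ) : vinner v (c • w) = c * vinner v w := by
  simp only [vinner, dotProduct, Finset.mul_sum]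
  refine Finset.sum_congr rfl fun i _ => ?_
  simp; ring

theorem vinner_prodVec (a c : ι → ℂ) (b d : κ → ℂ) :
    vinner (prodVec a b) (prodVec c d) = vinner a c * vinner b d := by
  simp only [vinner, dotProduct, Fintype.sum_prod_type, Finset.sum_mul_sum]
  refine Finset.sum_congr rfl fun i _ => Finset.sum_congr rfl fun j _ => ?_
  simp [prodVec]; ring

theorem vinner_conj (v w : ι → ℂ) : star (vinner v w) = vinner w v := by
  rw [vinner_eq, vinner_eq]; exact inner_conj_symm _ _

theorem vinner_cs (v w : ι → ℂ) : ‖vinner v w‖ ≤ vn v * vn w := by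
  rw [vinner_eq]; exact norm_inner_le_norm _ _

theorem vn_of_unit {v : ι → ℂ} (h : vinner v v = 1) : vn v = 1 := by
  rw [vinner_self] at h
  have : vn v ^ 2 = 1 := by exact_mod_cast h
  nlinarith [vn_nonneg v]

theorem vn_smul (c : ℝ) (hc : 0 ≤ c) (v : ι → ℂ) : vn (c • v) = c * vn v := by
  rw [vn, vn, WithLp.toLp_smul, norm_smul, Real.norm_of_nonneg hc]

theorem vinner_ketBra (z : ι → ℂ) (v w : ι → ℂ) :
    vinner z ((ketBra v w).mulVec z) = vinner z v * vinner w z := by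
  simp only [vinner, ketBra, mulVec, vecMulVec_apply, dotProduct]
  rw [Finset.sum_mul_sum]
  simp only [Finset.mul_sum]
  refine Finset.sum_congr rfl fun i _ => Finset.sum_congr rfl fun j _ => ?_
  ring

/-- squared norm of a combination of product vectors with orthonormal second factors -/
theorem vn_sq_comb {D : ℕ} (γ : Fin D → ℝ) (x : Fin D → ι → ℂ) (B : Fin D → κ → ℂ)
    (hB : Orthonormal' B) :
    vn (∑ i, γ i • prodVec (x i) (B i)) ^ 2 = ∑ i, γ i ^ 2 * vn (x i) ^ 2 := by
  have h : vinner (∑ i, γ i • prodVec (x i) (B i)) (∑ i, γ i • prodVec (x i) (B i))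
      = ((∑ i, γ i ^ 2 * vn (x i) ^ 2 : ℝ) : ℂ) := by
    rw [vinner_sum_left]
    push_cast
    refine Finset.sum_congr rfl fun i _ => ?_
    rw [vinner_sum_right, Finset.sum_eq_single i]
    · rw [vinner_rsmul_left, vinner_rsmul_right, vinner_prodVec, hB i i, vinner_self]
      push_cast; simp; ring
    · intro j _ hj
      rw [vinner_rsmul_left, vinner_rsmul_right, vinner_prodVec, hB i j]
      simp [hj.symm]
    · simp
  rw [vinner_self] at h
  exact_mod_cast h

/-! ### The lower bound -/

theorem proj_exists {k D : ℕ} (a : Fin k → ι → ℂ) (A : Fin D → ι → ℂ) (hA : Orthonormal' A) :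
    ∃ PA : Fin D → ι → ℂ, (∀ i j, vinner (PA i) (a j) = vinner (A i) (a j)) ∧
      (∀ i, vn (PA i) ^ 2 ≤ 1) ∧ ∑ i, vn (PA i) ^ 2 ≤ k := by
  classical
  let S : Submodule ℂ (EuclideanSpace ℂ ι) :=
    Submodule.span ℂ (Set.range fun j => (WithLp.toLp 2 (a j) : EuclideanSpace ℂ ι))
  let A' : Fin D → EuclideanSpace ℂ ι := fun i => WithLp.toLp 2 (A i)
  have hA' : Orthonormal ℂ A' := by
    rw [orthonormal_iff_ite]
    intro i j
    rw [← vinner_eq]; exact hA i j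
  have hdim : Module.finrank ℂ S ≤ k := by
    have := finrank_range_le_card (R := ℂ) (fun j => (WithLp.toLp 2 (a j) : EuclideanSpace ℂ ι))
    simpa [Set.finrank] using this
  refine ⟨fun i => (S.starProjection (A' i)).ofLp, ?_, ?_, ?_⟩
  · intro i j
    rw [vinner_eq, vinner_eq]
    have hm : (WithLp.toLp 2 (a j) : EuclideanSpace ℂ ι) ∈ S :=
      Submodule.subset_span ⟨j, rfl⟩
    change inner ℂ (S.starProjection (A' i)) _ = _
    rw [Submodule.inner_starProjection_left_eq_right,
      Submodule.starProjection_eq_self_iff.mpr hm]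
  · intro i
    change ‖S.starProjection (A' i)‖ ^ 2 ≤ 1
    have h1 := S.norm_starProjection_apply_le (A' i)
    rw [hA'.1 i] at h1
    nlinarith [norm_nonneg (S.starProjection (A' i))]
  · change ∑ i, ‖S.starProjection (A' i)‖ ^ 2 ≤ (k : ℝ)
    let e := stdOrthonormalBasis ℂ S
    have h1 : ∀ i, ‖S.starProjection (A' i)‖ ^ 2
        = ∑ j, ‖inner ℂ (A' i) (e j : EuclideanSpace ℂ ι)‖ ^ 2 := by
      intro i
      have := e.sum_sq_norm_inner_left (S.orthogonalProjectionOnto (A' i))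
      have h2 : ‖S.starProjection (A' i)‖ = ‖S.orthogonalProjectionOnto (A' i)‖ := rfl
      rw [h2, ← this]
      refine Finset.sum_congr rfl fun j _ => ?_
      congr 2
      rw [Submodule.coe_inner]
      change inner ℂ (S.starProjection (A' i)) _ = _
      rw [Submodule.inner_starProjection_left_eq_right,
        Submodule.starProjection_eq_self_iff.mpr (e j).2]
    simp_rw [h1]
    rw [Finset.sum_comm]
    calc _ ≤ ∑ j : Fin (Module.finrank ℂ S), (1 : ℝ) := by
          refine Finset.sum_le_sum fun j _ => ?_
          have := hA'.sum_inner_products_le (e j : EuclideanSpace ℂ ι) (s := Finset.univ)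
          have h3 : ‖(e j : EuclideanSpace ℂ ι)‖ = 1 := e.orthonormal.1 j
          rw [h3] at this
          simpa using this
      _ ≤ k := by simpa using hdim

theorem key_bound {k D : ℕ} (γ : Fin D → ℝ) (A : Fin D → ι → ℂ) (B : Fin D → κ → ℂ)
    (hA : Orthonormal' A) (hB : Orthonormal' B) (u : ι × κ → ℂ) (hu : SchmidtRankLE k u) :
    ∃ q : Fin D → ℝ, (∀ i, 0 ≤ q i) ∧ (∀ i, q i ≤ 1) ∧ ∑ i, q i ≤ k ∧
      ‖vinner (∑ i, γ i • prodVec (A i) (B i)) u‖ ^ 2 ≤ (∑ i, γ i ^ 2 * q i) * vn u ^ 2 := by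
  obtain ⟨a, b, hab⟩ := hu
  obtain ⟨PA, h1, h2, h3⟩ := proj_exists a A hA
  refine ⟨fun i => vn (PA i) ^ 2, fun i => by positivity, h2, h3, ?_⟩
  have h4 : vinner (∑ i, γ i • prodVec (A i) (B i)) u
      = vinner (∑ i, γ i • prodVec (PA i) (B i)) u := by
    rw [hab]
    simp only [vinner_sum_left, vinner_sum_right, vinner_rsmul_left, vinner_prodVec, h1]
  rw [h4, ← vn_sq_comb γ PA B hB, ← mul_pow]
  exact pow_le_pow_left₀ (norm_nonneg _) (vinner_cs _ _) 2

/-! ### The upper bound -/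

/-- The set whose infimum is the norm. -/
def gset (k : ℕ) (X : Matrix (ι × κ) (ι × κ) ℂ) : Set ℝ :=
  { r | ∃ (N : ℕ) (c : Fin N → ℂ) (v w : Fin N → (ι × κ → ℂ)),
    (∀ i, vinner (v i) (v i) = 1 ∧ vinner (w i) (w i) = 1 ∧
      SchmidtRankLE k (v i) ∧ SchmidtRankLE k (w i)) ∧
    X = ∑ i, c i • ketBra (v i) (w i) ∧
    r = ∑ i, ‖c i‖ }

theorem gammaNorm_eq (k : ℕ) (X : Matrix (ι × κ) (ι × κ) ℂ) : gammaNorm k X = sInf (gset k X) :=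
  rfl

theorem gset_bddBelow (k : ℕ) (X : Matrix (ι × κ) (ι × κ) ℂ) : BddBelow (gset k X) := by
  refine ⟨0, ?_⟩
  rintro _ ⟨N, c, v, w, _, _, rfl⟩
  positivity

theorem SchmidtRankLE.smul {k : ℕ} {u : ι × κ → ℂ} (hu : SchmidtRankLE k u) (c : ℝ) :
    SchmidtRankLE k (c • u) := by
  obtain ⟨a, b, rfl⟩ := hu
  refine ⟨fun i => c • a i, b, ?_⟩
  rw [Finset.smul_sum]
  refine Finset.sum_congr rfl fun i _ => ?_
  ext p
  simp [prodVec, mul_assoc]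

/-- Normalization of a vector, with a default for the zero vector. -/
theorem exists_unit {k : ℕ} (u0 : ι × κ → ℂ) (hu0 : vinner u0 u0 = 1)
    (hr0 : SchmidtRankLE k u0) (u : ι × κ → ℂ) (hu : SchmidtRankLE k u) :
    ∃ y : ι × κ → ℂ, vinner y y = 1 ∧ SchmidtRankLE k y ∧ u = vn u • y := by
  by_cases h : vn u = 0
  · refine ⟨u0, hu0, hr0, ?_⟩
    rw [h, zero_smul]
    have : (WithLp.toLp 2 u : EuclideanSpace ℂ (ι × κ)) = 0 := norm_eq_zero.1 h
    simpa using this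
  · refine ⟨(vn u)⁻¹ • u, ?_, hu.smul _, ?_⟩
    · rw [vinner_self, vn_smul _ (inv_nonneg.2 (vn_nonneg u)), inv_mul_cancel₀ h]; simp
    · rw [smul_smul, mul_inv_cancel₀ h, one_smul]

theorem gset_mem {k : ℕ} {T : Type*} [Fintype T] (u0 : ι × κ → ℂ) (hu0 : vinner u0 u0 = 1)
    (hr0 : SchmidtRankLE k u0) (w : T → ℝ) (hw : ∀ t, 0 ≤ w t) (u : T → ι × κ → ℂ)
    (hu : ∀ t, SchmidtRankLE k (u t)) (v : ι × κ → ℂ) (hv : v = ∑ t, w t • u t) :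
    (∑ t, w t * vn (u t)) ^ 2 ∈ gset k (ketBra v v) := by
  choose y hy1 hy2 hy3 using fun t => exists_unit u0 hu0 hr0 (u t) (hu t)
  let d : T → ℝ := fun t => w t * vn (u t)
  have hd : ∀ t, 0 ≤ d t := fun t => mul_nonneg (hw t) (vn_nonneg _)
  have hv' : v = ∑ t, d t • y t := by
    rw [hv]
    refine Finset.sum_congr rfl fun t _ => ?_
    conv_lhs => rw [hy3 t]
    rw [smul_smul]
  let E := (Fintype.equivFin (T × T)).symm
  refine ⟨Fintype.card (T × T),
    fun i => ((d (E i).1 * d (E i).2 : ℝ) : ℂ), fun i => y (E i).1, fun i => y (E i).2,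
    fun i => ⟨hy1 _, hy1 _, hy2 _, hy2 _⟩, ?_, ?_⟩
  · rw [E.sum_comp (fun p : T × T => ((d p.1 * d p.2 : ℝ) : ℂ) • ketBra (y p.1) (y p.2)),
      Fintype.sum_prod_type]
    ext p q
    simp only [ketBra, vecMulVec_apply, Matrix.sum_apply, Matrix.smul_apply]
    rw [hv']
    simp only [Finset.sum_apply, Pi.star_apply, star_sum, Finset.sum_mul_sum]
    refine Finset.sum_congr rfl fun i _ => Finset.sum_congr rfl fun j _ => ?_
    simp; ring
  · rw [E.sum_comp (fun p : T × T => ‖((d p.1 * d p.2 : ℝ) : ℂ)‖), Fintype.sum_prod_type, sq,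
      Finset.sum_mul_sum]
    refine Finset.sum_congr rfl fun i _ => Finset.sum_congr rfl fun j _ => ?_
    rw [Complex.norm_real, Real.norm_of_nonneg (mul_nonneg (hd i) (hd j))]

/-- A point of the hypersimplex is a convex combination of indicators of `k`-sets. -/
theorem hypersimplex {D k : ℕ} (hk1 : 1 ≤ k) (hk : k ≤ D) (p : Fin D → ℝ) (hp0 : ∀ i, 0 ≤ p i)
    (hp1 : ∀ i, p i ≤ 1) (hps : ∑ i, p i = k) :
    ∃ w : Equiv.Perm (Fin D) → ℝ, (∀ σ, 0 ≤ w σ) ∧ ∑ σ, w σ = 1 ∧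
      ∀ j, p j = ∑ σ, w σ * (if (σ.symm j : ℕ) < k then 1 else 0) := by
  classical
  have hk0 : (k : ℝ) ≠ 0 := by positivity
  have hkD : (0 : ℝ) ≤ (D : ℝ) - k := by
    have : (k : ℝ) ≤ D := by exact_mod_cast hk
    linarith
  have hcard : (Finset.univ.filter fun i : Fin D => (i : ℕ) < k).card = k := by
    rw [Fin.card_filter_val_lt, min_eq_right hk]
  have hcard' : ((Finset.univ.filter fun i : Fin D => ¬ (i : ℕ) < k).card : ℝ) = (D : ℝ) - k := by
    have := Finset.card_filter_add_card_filter_not (s := (Finset.univ : Finset (Fin D)))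
      (fun i : Fin D => (i : ℕ) < k)
    rw [hcard, Finset.card_univ, Fintype.card_fin] at this
    have h2 : ((k : ℝ) + ((Finset.univ.filter fun i : Fin D => ¬ (i : ℕ) < k).card : ℝ)) = D := by
      exact_mod_cast this
    linarith
  have hp1s : ∑ i, (1 - p i) = (D : ℝ) - k := by
    rw [Finset.sum_sub_distrib, hps]; simp
  let M : Matrix (Fin D) (Fin D) ℝ := fun i j =>
    if (i : ℕ) < k then p j / k else (1 - p j) / ((D : ℝ) - k)
  have hM : M ∈ doublyStochastic ℝ (Fin D) := by
    rw [mem_doublyStochastic_iff_sum]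
    refine ⟨?_, ?_, ?_⟩
    · intro i j
      simp only [M]
      split_ifs
      · exact div_nonneg (hp0 j) (by positivity)
      · exact div_nonneg (by linarith [hp1 j]) hkD
    · intro i
      simp only [M]
      split_ifs with h
      · rw [← Finset.sum_div, hps, div_self hk0]
      · rw [← Finset.sum_div, hp1s, div_self]
        have : k < D := lt_of_le_of_lt (not_lt.1 h) i.2
        have : (k : ℝ) < D := by exact_mod_cast this
        linarith
    · intro j
      simp only [M]
      rw [Finset.sum_ite, Finset.sum_const, Finset.sum_const, hcard, nsmul_eq_mul, nsmul_eq_mul,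
        hcard', mul_div_cancel₀ _ hk0]
      by_cases h : (D : ℝ) - k = 0
      · rw [h] at hp1s
        have := (Finset.sum_eq_zero_iff_of_nonneg (fun i _ => by linarith [hp1 i])).1 hp1s j
          (Finset.mem_univ j)
        rw [h]; linarith
      · rw [mul_div_cancel₀ _ h]; ring
  obtain ⟨w, hw0, hw1, hwM⟩ := exists_eq_sum_perm_of_mem_doublyStochastic hM
  refine ⟨w, hw0, hw1, fun j => ?_⟩
  have h1 : p j = ∑ i ∈ Finset.univ.filter (fun i : Fin D => (i : ℕ) < k), M i j := by
    rw [Finset.sum_congr rfl (g := fun _ => p j / k)]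
    · rw [Finset.sum_const, hcard, nsmul_eq_mul, mul_div_cancel₀ _ hk0]
    · intro i hi
      simp only [M, if_pos (Finset.mem_filter.1 hi).2]
  rw [h1, ← hwM]
  simp only [Matrix.sum_apply, Matrix.smul_apply, smul_eq_mul]
  rw [Finset.sum_comm]
  refine Finset.sum_congr rfl fun σ _ => ?_
  rw [← Finset.mul_sum, Finset.sum_filter]
  congr 1
  rw [Finset.sum_eq_single (σ.symm j)]
  · simp [Equiv.Perm.permMatrix, PEquiv.toMatrix_apply]
  · intro i _ hi
    have : σ i ≠ j := fun h => hi (by simp [← h])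
    simp [Equiv.Perm.permMatrix, PEquiv.toMatrix_apply, this, this.symm]
  · simp

theorem schmidtRankLE_perm {D k : ℕ} (hk : k ≤ D) (β : Fin D → ℝ) (A : Fin D → ι → ℂ)
    (B : Fin D → κ → ℂ) (σ : Equiv.Perm (Fin D)) :
    SchmidtRankLE k
      (∑ i, ((if (σ.symm i : ℕ) < k then 1 else 0) * β i) • prodVec (A i) (B i)) := by
  refine ⟨fun l => β (σ (Fin.castLE hk l)) • A (σ (Fin.castLE hk l)),
    fun l => B (σ (Fin.castLE hk l)), ?_⟩
  rw [← Equiv.sum_comp σ]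
  symm
  refine Fintype.sum_of_injective (Fin.castLE hk) (Fin.castLE_injective hk) _ _ ?_ ?_
  · intro l hl
    have : ¬ (l : ℕ) < k := fun h => hl ⟨⟨l, h⟩, rfl⟩
    simp [this]
  · intro l
    ext p
    simp [prodVec, mul_assoc]

theorem schmidtRankLE_prodVec {k : ℕ} (hk : 1 ≤ k) (x : ι → ℂ) (y : κ → ℂ) :
    SchmidtRankLE k (prodVec x y) := by
  refine ⟨fun i => if (i : ℕ) = 0 then x else 0, fun _ => y, ?_⟩
  rw [Finset.sum_eq_single ⟨0, hk⟩]
  · simp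
  · intro i _ hi
    have : (i : ℕ) ≠ 0 := fun h => hi (Fin.ext h)
    ext p
    simp [this, prodVec]
  · simp

/-- The abstract form of the computation. -/
theorem gamma_core {D k : ℕ} (hk1 : 1 ≤ k) (hk : k ≤ D) (v : ι × κ → ℂ)
    (α β p : Fin D → ℝ) (A : Fin D → ι → ℂ) (B : Fin D → κ → ℂ)
    (hA : Orthonormal' A) (hB : Orthonormal' B)
    (hv : v = ∑ i, α i • prodVec (A i) (B i)) (V : ℝ)
    (hV : ∑ i, β i * α i = V)
    (hq : ∀ q : Fin D → ℝ, (∀ i, 0 ≤ q i) → (∀ i, q i ≤ 1) → ∑ i, q i ≤ k →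
      ∑ i, β i ^ 2 * q i ≤ V)
    (hp0 : ∀ i, 0 ≤ p i) (hp1 : ∀ i, p i ≤ 1) (hps : ∑ i, p i = k)
    (hpα : ∀ i, α i = p i * β i) :
    gammaNorm k (ketBra v v) = V := by
  have hV0 : 0 ≤ V := by
    have := hq 0 (by simp) (by simp) (by simp)
    simpa using this
  have hvnA : ∀ i, vn (A i) = 1 := fun i => vn_of_unit (by rw [hA i i]; simp)
  obtain ⟨w, hw0, hw1, hwp⟩ := hypersimplex hk1 hk p hp0 hp1 hps
  let u : Equiv.Perm (Fin D) → ι × κ → ℂ := fun σ =>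
    ∑ i, ((if (σ.symm i : ℕ) < k then 1 else 0) * β i) • prodVec (A i) (B i)
  have hvu : v = ∑ σ, w σ • u σ := by
    simp only [u, Finset.smul_sum]
    rw [Finset.sum_comm, hv]
    refine Finset.sum_congr rfl fun i _ => ?_
    simp only [smul_smul, ← Finset.sum_smul]
    rw [hpα i, hwp i, Finset.sum_mul]
    simp only [mul_assoc]
  let i0 : Fin D := ⟨0, by omega⟩
  have hmem := gset_mem (k := k) (prodVec (A i0) (B i0))
    (by rw [vinner_prodVec, hA i0 i0, hB i0 i0]; simp)
    (schmidtRankLE_prodVec hk1 _ _) w hw0 u (fun σ => schmidtRankLE_perm hk β A B σ) v hvu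
  rw [gammaNorm_eq]
  refine le_antisymm ((csInf_le (gset_bddBelow k _) hmem).trans ?_) (le_csInf ⟨_, hmem⟩ ?_)
  · refine (Real.pow_arith_mean_le_arith_mean_pow Finset.univ w (fun σ => vn (u σ))
      (fun σ _ => hw0 σ) hw1 (fun σ _ => vn_nonneg _) 2).trans (le_of_eq ?_)
    have h1 : ∀ σ, vn (u σ) ^ 2 = ∑ i, (if (σ.symm i : ℕ) < k then 1 else 0) * β i ^ 2 := by
      intro σ
      rw [vn_sq_comb _ A B hB]
      refine Finset.sum_congr rfl fun i _ => ?_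
      rw [hvnA i]
      split_ifs <;> simp
    simp only [h1, Finset.mul_sum]
    rw [Finset.sum_comm, ← hV]
    refine Finset.sum_congr rfl fun i _ => ?_
    simp only [← mul_assoc]
    rw [← Finset.sum_mul, ← hwp i, hpα i]
    ring
  · rintro _ ⟨N, c, x, y, hxy, hX, rfl⟩
    let z : ι × κ → ℂ := ∑ i, β i • prodVec (A i) (B i)
    have hzv : vinner z v = (V : ℂ) := by
      rw [hv, vinner_sum_left, ← hV]
      push_cast
      refine Finset.sum_congr rfl fun i _ => ?_
      rw [vinner_sum_right, Finset.sum_eq_single i]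
      · rw [vinner_rsmul_left, vinner_rsmul_right, vinner_prodVec, hA i i, hB i i]
        simp
      · intro j _ hj
        rw [vinner_rsmul_left, vinner_rsmul_right, vinner_prodVec, hA i j]
        simp [hj.symm]
      · simp
    have hz : ∀ t : ι × κ → ℂ, vinner t t = 1 → SchmidtRankLE k t → ‖vinner z t‖ ^ 2 ≤ V := by
      intro t ht1 ht2
      obtain ⟨q, hq0, hq1, hq2, hq3⟩ := key_bound β A B hA hB t ht2
      rw [vn_of_unit ht1, one_pow, mul_one] at hq3
      exact hq3.trans (hq q hq0 hq1 hq2)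
    have h1 : vinner z ((ketBra v v).mulVec z) = (V : ℂ) * V := by
      rw [vinner_ketBra, hzv, ← vinner_conj, hzv]; simp
    have h2 : vinner z ((ketBra v v).mulVec z)
        = ∑ i, c i * (vinner z (x i) * vinner (y i) z) := by
      rw [hX, Matrix.sum_mulVec, vinner_sum_right]
      refine Finset.sum_congr rfl fun i _ => ?_
      rw [← vinner_ketBra, Matrix.smul_mulVec]
      simp [vinner, dotProduct_smul]
    have h3 : V * V ≤ (∑ i, ‖c i‖) * V := by
      have h4 : ‖vinner z ((ketBra v v).mulVec z)‖ = V * V := by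
        rw [h1, ← Complex.ofReal_mul, Complex.norm_real, Real.norm_of_nonneg (by positivity)]
      rw [← h4, h2, Finset.sum_mul]
      refine (norm_sum_le _ _).trans (Finset.sum_le_sum fun i _ => ?_)
      rw [norm_mul, norm_mul]
      refine mul_le_mul_of_nonneg_left ?_ (norm_nonneg _)
      obtain ⟨e1, e2, e3, e4⟩ := hxy i
      have f1 := hz _ e1 e3
      have f2 := hz _ e2 e4
      rw [← vinner_conj z (y i), norm_star]
      nlinarith [sq_nonneg (‖vinner z (x i)‖ - ‖vinner z (y i)‖)]
    rcases hV0.eq_or_lt with h | h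
    · rw [← h]; positivity
    · exact le_of_mul_le_mul_right h3 h

theorem sum_split {D r : ℕ} (hr : r ≤ D) (f g : ℕ → ℝ) :
    ∑ i : Fin D, (if (i : ℕ) < r then f i else g i)
      = ∑ i ∈ Finset.range r, f i + ∑ i ∈ Finset.Ico r D, g i := by
  rw [← Finset.sum_range (fun i => if i < r then f i else g i),
    ← Finset.sum_range_add_sum_Ico _ hr]
  congr 1
  · exact Finset.sum_congr rfl fun i hi => if_pos (Finset.mem_range.1 hi)
  · exact Finset.sum_congr rfl fun i hi => if_neg (not_lt.2 (Finset.mem_Ico.1 hi).1)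

/-- for a unit vector `v` with Schmidt coefficients
`α 0 ≥ α 1 ≥ ⋯ ≥ α (min m n - 1) ≥ 0` (presented via a Schmidt decomposition; the 0-based
`α i` is the paper's `α_{i+1}`), with `r` the largest index with `1 ≤ r < k` such that
`α_r > (Σ_{i=r+1}^{min(m,n)} α_i)/(k-r)` (`r = 0` if no such index exists) and
`α̃ := (Σ_{i=r+1}^{min(m,n)} α_i)/(k-r)`, we have
`‖|v⟩⟨v|‖_{γ,k} = Σ_{i=1}^r α_i² + (k-r)·α̃²`. -/
theorem gammaNorm_of_pure {m n k : ℕ} (hk1 : 1 ≤ k) (hk : k ≤ min m n)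
    (v : Fin m × Fin n → ℂ) (hv : vinner v v = 1)
    (α : ℕ → ℝ) (a : ℕ → Fin m → ℂ) (b : ℕ → Fin n → ℂ)
    (hα0 : ∀ i, i < min m n → 0 ≤ α i)
    (hαmono : ∀ i j, i ≤ j → j < min m n → α j ≤ α i)
    (ha : ∀ i j, i < min m n → j < min m n → vinner (a i) (a j) = if i = j then 1 else 0)
    (hb : ∀ i j, i < min m n → j < min m n → vinner (b i) (b j) = if i = j then 1 else 0)
    (hdec : v = ∑ i ∈ Finset.range (min m n), α i • prodVec (a i) (b i))
    (r : ℕ) (hrk : r < k)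
    (hr : 1 ≤ r → (∑ i ∈ Finset.Ico r (min m n), α i) / ((k : ℝ) - r) < α (r - 1))
    (hrmax : ∀ j, r < j → j < k →
      ¬ ((∑ i ∈ Finset.Ico j (min m n), α i) / ((k : ℝ) - j) < α (j - 1))) :
    gammaNorm k (ketBra v v) =
      (∑ i ∈ Finset.range r, α i ^ 2) +
        ((k : ℝ) - r) * ((∑ i ∈ Finset.Ico r (min m n), α i) / ((k : ℝ) - r)) ^ 2 := by
  set D := min m n with hD
  set T := ∑ i ∈ Finset.Ico r D, α i with hT
  have hrD : r < D := lt_of_lt_of_le hrk hk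
  have hkr : (0 : ℝ) < (k : ℝ) - r := by
    have : (r : ℝ) < k := by exact_mod_cast hrk
    linarith
  have hDr : (0 : ℝ) < (D : ℝ) - r := by
    have : (r : ℝ) < D := by exact_mod_cast hrD
    linarith
  have hkD : (k : ℝ) ≤ D := by exact_mod_cast hk
  set t := T / ((k : ℝ) - r) with ht
  have hTt : T = ((k : ℝ) - r) * t := by rw [ht, mul_div_cancel₀ _ hkr.ne']
  have hT0 : 0 ≤ T := Finset.sum_nonneg fun i hi => hα0 i (Finset.mem_Ico.1 hi).2
  have ht0 : 0 ≤ t := div_nonneg hT0 hkr.le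
  have hlow : ∀ i, i < r → t ≤ α i := by
    intro i hi
    exact (hr (by omega)).le.trans (hαmono i (r - 1) (by omega) (by omega))
  have hTsplit : T = α r + ∑ i ∈ Finset.Ico (r + 1) D, α i :=
    Finset.sum_eq_sum_Ico_succ_bot hrD α
  have hhigh0 : α r ≤ t := by
    have htail : 0 ≤ ∑ i ∈ Finset.Ico (r + 1) D, α i :=
      Finset.sum_nonneg fun i hi => hα0 i (Finset.mem_Ico.1 hi).2
    rw [ht, le_div_iff₀ hkr]
    by_cases h : r + 1 < k
    · have h1 := not_lt.1 (hrmax (r + 1) (by omega) h)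
      have h2 : (0 : ℝ) < (k : ℝ) - ((r + 1 : ℕ) : ℝ) := by
        have : ((r + 1 : ℕ) : ℝ) < k := by exact_mod_cast h
        linarith
      rw [le_div_iff₀ h2] at h1
      push_cast at h1
      rw [hTsplit]; nlinarith
    · have : k = r + 1 := by omega
      rw [hTsplit, this]; push_cast; nlinarith
  have hhigh : ∀ i, r ≤ i → i < D → α i ≤ t := fun i h1 h2 => (hαmono r i h1 h2).trans hhigh0
  let s : ℕ → ℝ := fun i => if t = 0 then ((k : ℝ) - r) / ((D : ℝ) - r) else α i / t
  have hs0 : ∀ i, i < D → 0 ≤ s i := by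
    intro i hi
    simp only [s]
    split_ifs
    · positivity
    · exact div_nonneg (hα0 i hi) ht0
  have hs1 : ∀ i, r ≤ i → i < D → s i ≤ 1 := by
    intro i h1 h2
    simp only [s]
    split_ifs
    · rw [div_le_one hDr]; linarith
    · exact div_le_one_of_le₀ (hhigh i h1 h2) ht0
  have hsα : ∀ i, r ≤ i → i < D → α i = s i * t := by
    intro i h1 h2
    simp only [s]
    split_ifs with h
    · have := hhigh i h1 h2
      have := hα0 i h2
      rw [h, mul_zero]; linarith
    · rw [div_mul_cancel₀ _ h]
  have hss : ∑ i ∈ Finset.Ico r D, s i = (k : ℝ) - r := by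
    simp only [s]
    split_ifs with h
    · rw [Finset.sum_const, Nat.card_Ico, nsmul_eq_mul, Nat.cast_sub hrD.le,
        mul_div_cancel₀ _ hDr.ne']
    · rw [← Finset.sum_div, ← hT, hTt, mul_div_cancel_right₀ _ h]
  refine gamma_core (D := D) hk1 hk v (fun i => α i) (fun i => if (i : ℕ) < r then α i else t)
    (fun i => if (i : ℕ) < r then 1 else s i) (fun i => a i) (fun i => b i) ?_ ?_ ?_ _ ?_ ?_ ?_ ?_
    ?_ ?_
  · intro i j
    rw [ha i j i.2 j.2]
    simp [Fin.ext_iff]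
  · intro i j
    rw [hb i j i.2 j.2]
    simp [Fin.ext_iff]
  · rw [hdec, Finset.sum_range]
  · have h1 : ∀ i : Fin D, (if (i : ℕ) < r then α i else t) * α i
        = if (i : ℕ) < r then α i ^ 2 else t * α i := by
      intro i; split_ifs <;> ring
    simp only [h1]
    rw [sum_split hrD.le (fun i => α i ^ 2) (fun i => t * α i), ← Finset.mul_sum, ← hT, hTt]
    ring
  · intro q hq0 hq1 hqs
    have h1 : ∀ i : Fin D, (if (i : ℕ) < r then α i else t) ^ 2 * q i
        ≤ t ^ 2 * q i + (if (i : ℕ) < r then α i ^ 2 - t ^ 2 else 0) := by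
      intro i
      split_ifs with h
      · have h2 : 0 ≤ α i ^ 2 - t ^ 2 := by nlinarith [hlow i h]
        nlinarith [hq1 i]
      · simp
    refine (Finset.sum_le_sum fun i _ => h1 i).trans ?_
    rw [Finset.sum_add_distrib, ← Finset.mul_sum,
      sum_split hrD.le (fun i => α i ^ 2 - t ^ 2) (fun _ => 0), Finset.sum_sub_distrib]
    simp only [Finset.sum_const, Finset.card_range, nsmul_eq_mul, Finset.sum_const_zero]
    nlinarith [mul_le_mul_of_nonneg_left hqs (sq_nonneg t)]
  · intro i
    split_ifs
    · exact zero_le_one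
    · exact hs0 i i.2
  · intro i
    split_ifs with h
    · exact le_rfl
    · exact hs1 i (not_lt.1 h) i.2
  · rw [sum_split hrD.le (fun _ => 1) s, hss]
    simp
  · intro i
    split_ifs with h
    · ring
    · exact hsα i (not_lt.1 h) i.2

end Ent
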